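/- Assume μ = 0 and let q ∈ (0,∞) (so θ_q = 0 < φ*). Then for all a ∈ ℕ₀, x ∈ ℕ with x > a, and f ∈ ℕ: Φ_q(x) − Φ_q(x + f) ≤ f (Φ_q(a) − Φ_q(a + 1)). -/

import Mathlib

open MeasureTheory Filter Set

/-- The probability generating function of the offspring distribution `p`. -/
noncomputable def ptilde (p : ℕ → ℝ) (z : ℝ) : ℝ := ∑' k, p k * z ^ k

/-- The p.g.f. of the immigration/culling mechanism: `rneg` is `r_{-1}`,
`r k` for `k ≥ 1` are the immigration probabilities (we require `r 0 = 0`). -/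
noncomputable def rtilde (rneg : ℝ) (r : ℕ → ℝ) (z : ℝ) : ℝ :=
  rneg / z + ∑' k, r k * z ^ k

/-- `f : ℕ → ℝ` is `q`-harmonic for the branching process with branching mechanism `p`
(rate `lam`) and immigration/culling mechanism `(rneg, r)` (rate `mu`). -/
def IsQHarmonic (lam mu q : ℝ) (p : ℕ → ℝ) (rneg : ℝ) (r : ℕ → ℝ) (f : ℕ → ℝ) : Prop :=
  ∀ x : ℕ, 1 ≤ x →
    (q + lam * x + mu) * f x
      = lam * x * (∑' k, p k * f (x + k - 1))
        + mu * (rneg * f (x - 1) + ∑' k, r k * f (x + k))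

/-- The harmonic function `Φ_q`; `φ` is the smallest fixed point of `ptilde p` in `(0,1]`
and `θ` is the delimiter `θ_q`. -/
noncomputable def Phi (lam mu : ℝ) (p : ℕ → ℝ) (rneg : ℝ) (r : ℕ → ℝ)
    (φ θ q : ℝ) (x : ℕ) : ℝ :=
  q * ∫ v in (0:ℝ)..φ,
      Real.exp (-∫ w in θ..v,
          (q + mu * (1 - rtilde rneg r w)) / (lam * |ptilde p w - w|))
        / (lam * |ptilde p v - v|) * v ^ x

/-- The harmonic function `Ψ_q`. -/
noncomputable def Psi (lam mu : ℝ) (p : ℕ → ℝ) (rneg : ℝ) (r : ℕ → ℝ)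
    (φ q : ℝ) (x : ℕ) : ℝ :=
  1 - q * ∫ v in φ..(1:ℝ),
      Real.exp (-∫ w in v..(1:ℝ),
          (q + mu * (1 - rtilde rneg r w)) / (lam * |ptilde p w - w|))
        / (lam * |ptilde p v - v|) * v ^ x

/-- Condition (E'): `∫_v^1 dz/(z - ptilde p z) < ∞` for some `v ∈ (φ, 1)`. -/
def CondE (p : ℕ → ℝ) (φ : ℝ) : Prop :=
  ∃ v, φ < v ∧ v < 1 ∧
    IntervalIntegrable (fun z => 1 / (z - ptilde p z)) MeasureTheory.volume v 1

lemma ptilde_contOn (p : ℕ → ℝ) (hp : ∀ k, 0 ≤ p k) (hs : Summable p) :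
    ContinuousOn (ptilde p) (Icc 0 1) := by
  unfold ptilde
  refine continuousOn_tsum (u := p) (fun i => by fun_prop) hs ?_
  intro n x hx
  rw [Real.norm_eq_abs, abs_of_nonneg (mul_nonneg (hp n) (pow_nonneg hx.1 n))]
  exact mul_le_of_le_one_right (hp n) (pow_le_one₀ hx.1 hx.2)

lemma W_integrable (g : ℝ → ℝ) (φ q : ℝ) (hφ0 : 0 < φ) (hq : 0 < q)
    (hg : ContinuousOn g (Ico 0 φ)) (hpos : ∀ v ∈ Ico 0 φ, 0 < g v) (hg0 : ∀ v, 0 ≤ g v) :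
    IntegrableOn (fun v => Real.exp (-∫ w in (0:ℝ)..v, q / g w) / g v) (Ioc 0 φ) := by
  have hγ : ContinuousOn (fun w => q / g w) (Ico 0 φ) :=
    continuousOn_const.div hg (fun v hv => (hpos v hv).ne')
  have hsub : ∀ b, b < φ → Icc 0 b ⊆ Ico 0 φ := fun b hb v hv => ⟨hv.1, hv.2.trans_lt hb⟩
  have hint : ∀ b, 0 ≤ b → b < φ → IntervalIntegrable (fun w => q / g w) volume 0 b := by
    intro b h0 hb
    apply ContinuousOn.intervalIntegrable
    rw [uIcc_of_le h0]
    exact hγ.mono (hsub b hb)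
  have hG : ∀ b, 0 ≤ b → b < φ →
      ContinuousOn (fun v => ∫ w in (0:ℝ)..v, q / g w) (Icc 0 b) := by
    intro b h0 hb
    have := intervalIntegral.continuousOn_primitive_interval' (hint b h0 hb) (a := 0) (by simp)
    rwa [uIcc_of_le h0] at this
  have hW : ∀ b, 0 ≤ b → b < φ → ContinuousOn
      (fun v => Real.exp (-∫ w in (0:ℝ)..v, q / g w) / g v) (Icc 0 b) := by
    intro b h0 hb
    refine ContinuousOn.div ?_ (hg.mono (hsub b hb)) (fun v hv => (hpos v (hsub b hb hv)).ne')
    exact (hG b h0 hb).neg.rexp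
  have hWi : ∀ b, 0 ≤ b → b < φ → IntervalIntegrable
      (fun v => Real.exp (-∫ w in (0:ℝ)..v, q / g w) / g v) volume 0 b := by
    intro b h0 hb
    apply ContinuousOn.intervalIntegrable
    rw [uIcc_of_le h0]
    exact hW b h0 hb
  have hval : ∀ b, 0 ≤ b → b < φ →
      ∫ v in (0:ℝ)..b, Real.exp (-∫ w in (0:ℝ)..v, q / g w) / g v ≤ 1 / q := by
    intro b h0 hb
    have := intervalIntegral.integral_eq_sub_of_hasDerivAt_of_le h0
      (f := fun v => -(Real.exp (-∫ w in (0:ℝ)..v, q / g w)) / q)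
      (f' := fun v => Real.exp (-∫ w in (0:ℝ)..v, q / g w) / g v)
      ((hG b h0 hb).neg.rexp.neg.div_const q) ?_ (hWi b h0 hb)
    · rw [this]
      have : 0 < Real.exp (-∫ w in (0:ℝ)..b, q / g w) / q := by positivity
      simp only [intervalIntegral.integral_same, neg_zero, Real.exp_zero, neg_div]
      linarith
    · intro v hv
      have hvφ : v < φ := hv.2.trans hb
      have hnhds : Ico 0 φ ∈ nhds v := Ico_mem_nhds hv.1 hvφ
      have hd : HasDerivAt (fun v => ∫ w in (0:ℝ)..v, q / g w) (q / g v) v := by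
        refine intervalIntegral.integral_hasDerivAt_right (hint v hv.1.le hvφ) ?_
          (hγ.continuousAt hnhds)
        exact (hγ.mono Ioo_subset_Ico_self).stronglyMeasurableAtFilter isOpen_Ioo v ⟨hv.1, hvφ⟩
      have hne := (hpos v ⟨hv.1.le, hvφ⟩).ne'
      have h2 := hd.fun_neg.exp.fun_neg.div_const q
      refine h2.congr_deriv ?_
      generalize Real.exp _ = E
      field_simp
  obtain ⟨u, -, hu, hut⟩ := exists_seq_strictMono_tendsto' hφ0
  refine integrableOn_Ioc_of_intervalIntegral_norm_bounded_right (l := atTop) (b := u)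
    (I := 1 / q) (fun i => ?_) hut ?_
  · have := hWi (u i) (hu i).1.le (hu i).2
    rwa [intervalIntegrable_iff_integrableOn_Ioc_of_le (hu i).1.le] at this
  · refine Eventually.of_forall fun i => ?_
    refine le_trans (le_of_eq ?_) (hval (u i) (hu i).1.le (hu i).2)
    try rw [← intervalIntegral.integral_of_le (hu i).1.le]
    congr 1
    ext v
    exact Real.norm_of_nonneg (div_nonneg (Real.exp_pos _).le (hg0 v))

/-- with `μ = 0` (so `θ_q = 0 < φ*`), for all `a ∈ ℕ`, `x ∈ ℕ` with `x > a`
and `f ∈ ℕ`, `f ≥ 1`: `Φ_q(x) - Φ_q(x + f) ≤ f (Φ_q(a) - Φ_q(a + 1))`. -/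
theorem stmt18 (lam : ℝ) (p : ℕ → ℝ) (φ q : ℝ)
    (hlam : 0 < lam)
    (hp : ∀ k, 0 ≤ p k) (hpsum : ∑' k, p k = 1) (hp0 : 0 < p 0) (hp1 : p 1 = 0)
    (hp0lt : p 0 < 1)
    (hφ0 : 0 < φ) (hφ1 : φ ≤ 1) (hφfix : ptilde p φ = φ)
    (hφlo : ∀ z : ℝ, 0 < z → z < φ → z < ptilde p z)
    (hφhi : ∀ z : ℝ, φ < z → z < 1 → ptilde p z < z)
    (hq : 0 < q) :
    ∀ a x : ℕ, a < x → ∀ f : ℕ, 1 ≤ f →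
      Phi lam 0 p 0 (fun _ => 0) φ 0 q x - Phi lam 0 p 0 (fun _ => 0) φ 0 q (x + f)
        ≤ f * (Phi lam 0 p 0 (fun _ => 0) φ 0 q a
            - Phi lam 0 p 0 (fun _ => 0) φ 0 q (a + 1)) := by
  have hs : Summable p := by
    by_contra h
    rw [tsum_eq_zero_of_not_summable h] at hpsum
    exact zero_ne_one hpsum
  have hc : ContinuousOn (fun v => lam * |ptilde p v - v|) (Ico 0 φ) := by
    have := (ptilde_contOn p hp hs).mono
      (fun v (hv : v ∈ Ico 0 φ) => (⟨hv.1, hv.2.le.trans hφ1⟩ : v ∈ Icc (0:ℝ) 1))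
    exact continuousOn_const.mul (this.sub continuousOn_id).abs
  have hpos : ∀ v ∈ Ico 0 φ, 0 < lam * |ptilde p v - v| := by
    intro v hv
    refine mul_pos hlam (abs_pos.2 ?_)
    rcases hv.1.eq_or_lt with h | h
    · subst h
      have : ptilde p 0 = p 0 := by
        unfold ptilde
        rw [tsum_eq_single 0]
        · simp
        · intro k hk
          simp [hk]
      rw [this, sub_zero]
      exact hp0.ne'
    · exact (sub_pos.2 (hφlo v h hv.2)).ne'
  have hnn : ∀ v, 0 ≤ lam * |ptilde p v - v| := fun v => by positivity
  have hW := W_integrable _ φ q hφ0 hq hc hpos hnn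
  intro a x hax f hf
  simp only [Phi, zero_mul, add_zero]
  have hWnn : ∀ v, 0 ≤ Real.exp (-∫ w in (0:ℝ)..v, q / (lam * |ptilde p w - w|))
      / (lam * |ptilde p v - v|) := fun v => div_nonneg (Real.exp_pos _).le (hnn v)
  revert hW hWnn
  generalize hWd : (fun v => Real.exp (-∫ w in (0:ℝ)..v, q / (lam * |ptilde p w - w|))
      / (lam * |ptilde p v - v|)) = W
  intro hW hWnn
  have hWv : ∀ v, Real.exp (-∫ w in (0:ℝ)..v, q / (lam * |ptilde p w - w|))
      / (lam * |ptilde p v - v|) = W v := fun v => congrFun hWd v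
  simp only [hWv] at hWnn ⊢
  have hI : ∀ n : ℕ, IntervalIntegrable (fun v => W v * v ^ n) volume 0 φ := by
    intro n
    have h1 : IntervalIntegrable W volume 0 φ :=
      (intervalIntegrable_iff_integrableOn_Ioc_of_le hφ0.le).2 hW
    exact h1.mul_continuousOn (by fun_prop)
  rw [← mul_sub, ← mul_sub, mul_left_comm]
  refine mul_le_mul_of_nonneg_left ?_ hq.le
  rw [← intervalIntegral.integral_sub (hI _) (hI _), ← intervalIntegral.integral_sub (hI _) (hI _),
    ← intervalIntegral.integral_const_mul]
  refine intervalIntegral.integral_mono_on hφ0.le ((hI _).sub (hI _))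
    (((hI _).sub (hI _)).const_mul _) ?_
  intro v hv
  have hv0 := hv.1
  have hv1 := hv.2.trans hφ1
  have hB : 1 - v ^ f ≤ f * (1 - v) := by
    have := one_add_mul_le_pow (a := v - 1) (by linarith) f
    rw [add_sub_cancel] at this
    linarith
  have hA : v ^ x ≤ v ^ a := pow_le_pow_of_le_one hv0 hv1 hax.le
  have hC : v ^ x * (1 - v ^ f) ≤ v ^ a * (f * (1 - v)) :=
    mul_le_mul hA hB (sub_nonneg.2 (pow_le_one₀ hv0 hv1)) (pow_nonneg hv0 _)
  have := mul_le_mul_of_nonneg_left hC (hWnn v)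
  rw [pow_add, pow_succ]
  linarith
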